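/- Let X be a Banach space, let 1 ≤ p ≤ 2, let 0 < γ < 1 and K > 0. Suppose that for every nonempty finite index set J and every family of vectors (x_i)_{i∈J} in X there exists a subset I ⊆ J with |I| ≥ γ|J| and E‖∑_{i∈I} ε_i x_i‖ ≤ K |J|^{1/p} max_{i∈J} ‖x_i‖. Then for every n ∈ ℕ and all x₁,…,xₙ ∈ X one has E‖∑_{i=1}^n ε_i x_i‖ ≤ (K / (1 − (1−γ)^{1/p})) n^{1/p} max_{1≤i≤n} ‖x_i‖. -/

import Mathlib

/-!
The Rademacher average is subadditive over disjoint unions of index sets (triangle inequality plus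
Fubini for sign vectors), `radAvg_union_le`. Write `r = (1 - γ) ^ (1 / p) < 1` and
`C = K / (1 - r)`, so that `K + r * C = C`. Extracting `I ⊆ J` leaves a residual set of size at most
`(1 - γ) |J|`, so strong induction on the size of the index set bounds the average over `J` by
`(K + r * C) |J| ^ (1 / p) * M = C |J| ^ (1 / p) * M`, where `M` bounds the norms `‖xᵢ‖`.
The identity `K + r * C = C` replaces the summation of the geometric series.
-/

open scoped BigOperators

/-- The Rademacher expectation `E ‖∑_{i ∈ I} εᵢ xᵢ‖` for a family `(xᵢ)` indexed by a finite
set `I` of indices, realized concretely as the average over all sign vectors on `I`.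
Since a Rademacher family `(εᵢ)` consists of independent random variables uniformly
distributed on `{-1, 1}`, this coincides with the expectation of `‖∑_{i ∈ I} εᵢ xᵢ‖` for any
Rademacher family on any probability space. -/
noncomputable def radAvg {X : Type*} [NormedAddCommGroup X] [NormedSpace ℝ X]
    (I : Finset ℕ) (x : ℕ → X) : ℝ :=
  (∑ s : {i // i ∈ I} → Bool, ‖∑ i : {i // i ∈ I}, (if s i then (1 : ℝ) else -1) • x i‖) /
    2 ^ I.card

lemma radAvg_union_le {X : Type*} [NormedAddCommGroup X] [NormedSpace ℝ X]
    (I L : Finset ℕ) (hd : Disjoint I L) (x : ℕ → X) :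
    radAvg (I ∪ L) x ≤ radAvg I x + radAvg L x := by
  have key : ∑ s : {i // i ∈ I ∪ L} → Bool,
        ‖∑ i : {i // i ∈ I ∪ L}, (if s i then (1 : ℝ) else -1) • x i‖
      = ∑ q : ({i // i ∈ I} → Bool) × ({i // i ∈ L} → Bool),
        ‖∑ i : {i // i ∈ I}, (if q.1 i then (1 : ℝ) else -1) • x i
          + ∑ i : {i // i ∈ L}, (if q.2 i then (1 : ℝ) else -1) • x i‖ := by
    refine Fintype.sum_equiv
      (((Equiv.Finset.union I L hd).symm.arrowCongr (Equiv.refl Bool)).trans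
        (Equiv.sumArrowEquivProdArrow _ _ _)) _ _ fun s => ?_
    rw [← Equiv.sum_comp (Equiv.Finset.union I L hd), Fintype.sum_sum_type]
    rfl
  unfold radAvg
  rw [key, Finset.card_union_of_disjoint hd, pow_add, div_add_div _ _ (by positivity)
    (by positivity)]
  gcongr
  refine (Finset.sum_le_sum fun q _ => norm_add_le _ _).trans_eq ?_
  rw [Finset.sum_add_distrib, Fintype.sum_prod_type, Fintype.sum_prod_type]
  simp [← Finset.mul_sum, Finset.card_univ, mul_comm]

/-- The exhaustion step, for an arbitrary finite index set and any bound `M` on the norms; unlike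
the maximum over the index set, `M` stays fixed when passing to the residual set. -/
lemma radAvg_le_of_extraction {X : Type*} [NormedAddCommGroup X] [NormedSpace ℝ X]
    {p γ K : ℝ} (hp : 0 < p) (hγ0 : 0 < γ) (hγ1 : γ < 1) (hK : 0 < K)
    (h : ∀ (J : Finset ℕ) (hJ : J.Nonempty) (x : ℕ → X),
      ∃ I ⊆ J, γ * J.card ≤ I.card ∧
        radAvg I x ≤ K * (J.card : ℝ) ^ (1 / p) * J.sup' hJ fun i => ‖x i‖)
    (x : ℕ → X) {M : ℝ} (hM : 0 ≤ M) (J : Finset ℕ) (hJM : ∀ i ∈ J, ‖x i‖ ≤ M) :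
    radAvg J x ≤ K / (1 - (1 - γ) ^ (1 / p)) * (J.card : ℝ) ^ (1 / p) * M := by
  have hr1 : (1 - γ) ^ (1 / p) < 1 :=
    Real.rpow_lt_one (by linarith) (by linarith) (by positivity)
  set r := (1 - γ) ^ (1 / p) with hr
  have hr' : 0 < 1 - r := by linarith
  have hC : 0 < K / (1 - r) := by positivity
  induction J using Finset.strongInduction with
  | H J ih =>
  rcases J.eq_empty_or_nonempty with rfl | hJ
  · have h0 : radAvg ∅ x = 0 := by simp [radAvg]
    rw [h0]
    positivity
  obtain ⟨I, hIJ, hcard, hI⟩ := h J hJ x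
  have hJpos : (0 : ℝ) < J.card := by exact_mod_cast hJ.card_pos
  have hIne : I.Nonempty := by
    rw [← Finset.card_pos]
    have : (0 : ℝ) < I.card := lt_of_lt_of_le (by positivity) hcard
    exact_mod_cast this
  have hsup : (J.sup' hJ fun i => ‖x i‖) ≤ M := Finset.sup'_le _ _ hJM
  have hrec := ih (J \ I) (Finset.sdiff_ssubset hIJ hIne)
    fun i hi => hJM i (Finset.sdiff_subset hi)
  have hres : ((J \ I).card : ℝ) ≤ (1 - γ) * J.card := by
    have h1 : ((J \ I).card : ℝ) + I.card = J.card := by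
      exact_mod_cast Finset.card_sdiff_add_card_eq_card hIJ
    linarith
  have hpow : ((J \ I).card : ℝ) ^ (1 / p) ≤ r * (J.card : ℝ) ^ (1 / p) := by
    rw [hr, ← Real.mul_rpow (by linarith) hJpos.le]
    exact Real.rpow_le_rpow (by positivity) hres (by positivity)
  calc radAvg J x = radAvg (I ∪ J \ I) x := by rw [Finset.union_sdiff_of_subset hIJ]
    _ ≤ radAvg I x + radAvg (J \ I) x := radAvg_union_le _ _ Finset.disjoint_sdiff x
    _ ≤ K * (J.card : ℝ) ^ (1 / p) * M
        + K / (1 - r) * (r * (J.card : ℝ) ^ (1 / p)) * M := by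
      refine add_le_add (hI.trans ?_) (hrec.trans ?_) <;> gcongr
    _ = K / (1 - r) * (J.card : ℝ) ^ (1 / p) * M := by
      field_simp
      ring

/-- The greedy exhaustion argument: suppose that for every nonempty finite index set `J` and
every family `(xᵢ)_{i ∈ J}` in a Banach space `X` there is a subset `I ⊆ J` with
`|I| ≥ γ |J|` and `E ‖∑_{i ∈ I} εᵢ xᵢ‖ ≤ K |J|^{1/p} max_{i ∈ J} ‖xᵢ‖`.  Then for every `n`
and all `x₁, …, xₙ ∈ X`,
`E ‖∑_{i=1}^n εᵢ xᵢ‖ ≤ (K / (1 − (1−γ)^{1/p})) n^{1/p} max_{1 ≤ i ≤ n} ‖xᵢ‖`. -/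
theorem rademacher_bound_of_subset_extraction
    {X : Type*} [NormedAddCommGroup X] [NormedSpace ℝ X] [CompleteSpace X]
    (p : ℝ) (hp1 : 1 ≤ p) (hp2 : p ≤ 2) (γ : ℝ) (hγ0 : 0 < γ) (hγ1 : γ < 1)
    (K : ℝ) (hK : 0 < K)
    (h : ∀ (J : Finset ℕ) (hJ : J.Nonempty) (x : ℕ → X),
      ∃ I ⊆ J, γ * J.card ≤ I.card ∧
        radAvg I x ≤ K * (J.card : ℝ) ^ (1 / p) * J.sup' hJ fun i => ‖x i‖) :
    ∀ (n : ℕ) (hn : 0 < n) (x : ℕ → X),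
      radAvg (Finset.range n) x ≤
        K / (1 - (1 - γ) ^ (1 / p)) * (n : ℝ) ^ (1 / p) *
          (Finset.range n).sup' (Finset.nonempty_range_iff.mpr hn.ne') fun i => ‖x i‖ := by
  intro n hn x
  have hne : (Finset.range n).Nonempty := Finset.nonempty_range_iff.mpr hn.ne'
  have hle : ∀ i ∈ Finset.range n, ‖x i‖ ≤ (Finset.range n).sup' hne fun i => ‖x i‖ :=
    fun i hi => Finset.le_sup' (fun i => ‖x i‖) hi
  have hM := (norm_nonneg _).trans (hle 0 (Finset.mem_range.mpr hn))
  simpa using radAvg_le_of_extraction (by linarith) hγ0 hγ1 hK h x hM (Finset.range n) hle
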